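/- Let k be an algebraically closed field of characteristic zero, let n ≥ 1 and m ≥ n be integers, and set q = ⌊m/n⌋. In the polynomial ring R = k[x_{i,c} : 1 ≤ i ≤ m, 1 ≤ c ≤ n], for each j = 0, …, q−1 let d_j be the determinant of the n × n matrix (x_{jn+r, c})_{1 ≤ r, c ≤ n}. Then the Krull dimension of the quotient ring R/(d₀, …, d_{q−1}) equals mn − q. -/

import Mathlib

theorem aux_dim_le_of_integral {A B : Type*} [CommRing A] [CommRing B] (f : A →+* B)
    (hf : f.IsIntegral) : ringKrullDim B ≤ ringKrullDim A := by
  let _ : Algebra A B := f.toAlgebra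
  have : Algebra.IsIntegral A B := ⟨hf⟩
  refine Order.krullDim_le_of_strictMono (PrimeSpectrum.comap f) ?_
  intro p q hpq
  have h : p.asIdeal < q.asIdeal := hpq
  obtain ⟨hle, x, hxJ, hxI⟩ := SetLike.lt_iff_le_and_exists.mp h
  exact Ideal.comap_lt_comap_of_integral_mem_sdiff hle ⟨hxJ, hxI⟩
    (Algebra.IsIntegral.isIntegral x)

theorem aux_lower {k σ J : Type*} [Field k] [IsAlgClosed k] [Finite σ] [Finite J]
    (d : J → MvPolynomial σ k) (hd : ∀ j, MvPolynomial.eval 0 (d j) = 0) :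
    ((Nat.card σ : ℕ) : WithBot ℕ∞) ≤
      ringKrullDim (MvPolynomial σ k ⧸ Ideal.span (Set.range d)) + (Nat.card J : ℕ) := by
  classical
  have hdim : ringKrullDim (MvPolynomial σ k) = (Nat.card σ : ℕ) := by
    simp
  have : FiniteRingKrullDim (MvPolynomial σ k) := by
    rw [finiteRingKrullDim_iff_ne_bot_and_top, hdim]
    exact ⟨WithBot.coe_ne_bot, fun h => by
      have := (WithBot.coe_inj (a := ((Nat.card σ : ℕ) : ℕ∞)) (b := ⊤)).1 h
      exact ENat.natCast_ne_top _ this⟩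
  obtain ⟨p, hp, hph⟩ := Ideal.exists_isMaximal_height (R := MvPolynomial σ k)
  obtain ⟨a, rfl⟩ := MvPolynomial.isMaximal_iff_eq_vanishingIdeal_singleton.1 hp
  let e : MvPolynomial σ k ≃ₐ[k] MvPolynomial σ k :=
    AlgEquiv.ofAlgHom (MvPolynomial.aeval fun i => MvPolynomial.X i - MvPolynomial.C (a i))
      (MvPolynomial.aeval fun i => MvPolynomial.X i + MvPolynomial.C (a i))
      (by ext i; simp [← MvPolynomial.algebraMap_eq])
      (by ext i; simp [← MvPolynomial.algebraMap_eq])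
  let P := (MvPolynomial.vanishingIdeal k {a}).comap e.toRingEquiv
  have hP : P.height = (MvPolynomial.vanishingIdeal k {a}).height :=
    RingEquiv.height_comap e.toRingEquiv _
  have hpp := hp.isPrime
  have : P.IsPrime := Ideal.comap_isPrime _ _
  have hcomp : (MvPolynomial.aeval a).comp e.toAlgHom = MvPolynomial.aeval (0 : σ → k) := by
    ext i; simp [e]
  have hs : Set.range d ⊆ P := by
    rintro _ ⟨j, rfl⟩
    change e (d j) ∈ MvPolynomial.vanishingIdeal k {a}
    rw [MvPolynomial.mem_vanishingIdeal_singleton_iff]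
    have := DFunLike.congr_fun hcomp (d j)
    refine Eq.trans this ?_
    rw [MvPolynomial.aeval_eq_eval]
    exact hd j
  have h1 := Ideal.height_le_ringKrullDim_quotient_add_encard (p := P) _ hs
  rw [hP, hph, hdim] at h1
  refine h1.trans ?_
  gcongr
  have : (Set.range d).encard ≤ (Nat.card J : ℕ) := by
    rw [← Set.image_univ]
    refine (Set.encard_image_le _ _).trans ?_
    rw [Set.encard_univ, ENat.card_eq_coe_natCard]
  exact_mod_cast this

theorem aux_upper {k σ J : Type*} [Field k] [Finite σ] {n : ℕ} (hn : 0 < n)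
    (e : J → Fin n → Fin n → σ)
    (he : ∀ j r c j' r' c', e j r c = e j' r' c' → j = j' ∧ r = r' ∧ c = c') :
    ringKrullDim (MvPolynomial σ k ⧸ Ideal.span (Set.range fun j : J =>
      Matrix.det (Matrix.of fun r c : Fin n => (MvPolynomial.X (e j r c) : MvPolynomial σ k))))
      ≤ (Nat.card σ - Nat.card J : ℕ) := by
  classical
  set I := Ideal.span (Set.range fun j : J =>
      Matrix.det (Matrix.of fun r c : Fin n => (MvPolynomial.X (e j r c) : MvPolynomial σ k)))
    with hI
  let z : Fin n := ⟨0, hn⟩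
  let τ := {s : σ // ¬ s ∈ Set.range (fun j => e j z z)}
  have hinj : Function.Injective (fun j => e j z z) := fun j j' h => (he _ _ _ _ _ _ h).1
  have hcard : Nat.card τ = Nat.card σ - Nat.card J := by
    have := Fintype.ofFinite σ
    have := Finite.of_injective _ hinj
    have := Fintype.ofFinite J
    have h2 : Nat.card τ = _ := Nat.card_eq_fintype_card
    rw [h2, Fintype.card_subtype_compl, Nat.card_eq_fintype_card, Nat.card_eq_fintype_card,
      ← Set.card_range_of_injective hinj]
  let Q := MvPolynomial σ k ⧸ I
  let x : σ → Q := fun s => Ideal.Quotient.mk I (MvPolynomial.X s)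
  let g : σ → Q := fun s => x s - if h : ∃ j, ∃ r, e j r r = s then x (e h.choose z z) else 0
  have hg : ∀ j r c, g (e j r c) = x (e j r c) - if r = c then x (e j z z) else 0 := by
    intro j r c
    simp only [g]
    congr 1
    by_cases hrc : r = c
    · subst hrc
      have h : ∃ j', ∃ r', e j' r' r' = e j r r := ⟨j, r, rfl⟩
      rw [dif_pos h, if_pos rfl]
      obtain ⟨r', hr'⟩ := h.choose_spec
      rw [(he _ _ _ _ _ _ hr').1]
    · rw [dif_neg, if_neg hrc]
      rintro ⟨j', r', h⟩
      have := he _ _ _ _ _ _ h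
      exact hrc (this.2.1.symm.trans this.2.2)
  have hgx : ∀ s, x s = g s ∨ ∃ j, x s = g s + x (e j z z) := by
    intro s
    by_cases h : ∃ j, ∃ r, e j r r = s
    · refine Or.inr ⟨h.choose, ?_⟩
      simp only [g]
      rw [dif_pos h, sub_add_cancel]
    · refine Or.inl ?_
      simp only [g]
      rw [dif_neg h, sub_zero]
  clear_value g
  let f : MvPolynomial τ k →ₐ[k] Q := MvPolynomial.aeval fun s => g s.1
  have hfX : ∀ s : τ, f (MvPolynomial.X s) = g s.1 := fun s => MvPolynomial.aeval_X _ _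
  clear_value f
  let N : J → Matrix (Fin n) (Fin n) (MvPolynomial τ k) := fun j => Matrix.of fun r c =>
    if h : ¬ e j r c ∈ Set.range (fun j => e j z z) then MvPolynomial.X (⟨e j r c, h⟩ : τ) else 0
  have hN : ∀ j r c, f (N j r c) = g (e j r c) := by
    intro j r c
    simp only [N, Matrix.of_apply]
    split_ifs with h
    · obtain ⟨j', h'⟩ := h
      obtain ⟨rfl, rfl, rfl⟩ := he _ _ _ _ _ _ h'
      rw [hg]; simp
    · exact hfX ⟨e j r c, h⟩
  have hz : ∀ j, f.toRingHom.IsIntegralElem (x (e j z z)) := by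
    intro j
    refine ⟨(-(N j)).charpoly, Matrix.charpoly_monic _, ?_⟩
    rw [Polynomial.eval₂_eq_eval_map, ← Matrix.charpoly_map, Matrix.eval_charpoly]
    have hm : Matrix.scalar (Fin n) (x (e j z z)) - (-(N j)).map f.toRingHom
        = (Ideal.Quotient.mk I).mapMatrix
          (Matrix.of fun r c : Fin n => (MvPolynomial.X (e j r c) : MvPolynomial σ k)) := by
      ext r c
      have h1 : f.toRingHom (N j r c) = g (e j r c) := hN j r c
      rw [Matrix.sub_apply, Matrix.map_apply, Matrix.neg_apply, map_neg, h1, hg]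
      simp only [Matrix.scalar_apply, Matrix.diagonal_apply, RingHom.mapMatrix_apply,
        Matrix.map_apply, Matrix.of_apply]
      change _ = x (e j r c)
      ring
    rw [hm, ← RingHom.map_det]
    exact Ideal.Quotient.eq_zero_iff_mem.2 (Ideal.subset_span ⟨j, rfl⟩)
  have hgi : ∀ s, f.toRingHom.IsIntegralElem (g s) := by
    intro s
    by_cases h : s ∈ Set.range (fun j => e j z z)
    · obtain ⟨j, rfl⟩ := h
      have : g (e j z z) = 0 := by rw [hg]; simp
      simp only [this]
      exact f.toRingHom.isIntegralElem_zero
    · rw [← hfX ⟨s, h⟩]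
      exact f.toRingHom.isIntegralElem_map
  have hx : ∀ s, f.toRingHom.IsIntegralElem (x s) := by
    intro s
    rcases hgx s with h | ⟨j, h⟩
    · rw [h]; exact hgi s
    · rw [h]; exact RingHom.IsIntegralElem.add _ (hgi s) (hz j)
  have hf : f.toRingHom.IsIntegral := by
    intro y
    obtain ⟨p, rfl⟩ := Ideal.Quotient.mk_surjective y
    induction p using MvPolynomial.induction_on with
    | C a =>
      have : Ideal.Quotient.mk I (MvPolynomial.C a) = f.toRingHom (MvPolynomial.C a) :=
        (f.commutes a).symm
      rw [this]
      exact f.toRingHom.isIntegralElem_map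
    | add p q hp hq => rw [map_add]; exact hp.add _ hq
    | mul_X p s hp => rw [map_mul]; exact hp.mul _ (hx s)
  refine (aux_dim_le_of_integral _ hf).trans ?_
  rw [← hcard]
  simp

theorem aux_main {k σ J : Type*} [Field k] [IsAlgClosed k] [Finite σ] [Finite J] {n : ℕ}
    (hn : 0 < n) (e : J → Fin n → Fin n → σ)
    (he : ∀ j r c j' r' c', e j r c = e j' r' c' → j = j' ∧ r = r' ∧ c = c') :
    ringKrullDim (MvPolynomial σ k ⧸ Ideal.span (Set.range fun j : J =>
      Matrix.det (Matrix.of fun r c : Fin n => (MvPolynomial.X (e j r c) : MvPolynomial σ k))))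
      = (Nat.card σ - Nat.card J : ℕ) := by
  refine le_antisymm (aux_upper hn e he) ?_
  have h := aux_lower (fun j : J =>
      Matrix.det (Matrix.of fun r c : Fin n => (MvPolynomial.X (e j r c) : MvPolynomial σ k))) (by
    intro j
    rw [RingHom.map_det]
    have : (MvPolynomial.eval (0 : σ → k)).mapMatrix (Matrix.of fun r c : Fin n =>
        (MvPolynomial.X (e j r c) : MvPolynomial σ k)) = 0 := by
      ext r c; simp
    rw [this]
    haveI : Nonempty (Fin n) := ⟨⟨0, hn⟩⟩
    exact Matrix.det_zero)
  generalize ringKrullDim (MvPolynomial σ k ⧸ Ideal.span (Set.range fun j : J =>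
      Matrix.det (Matrix.of fun r c : Fin n => (MvPolynomial.X (e j r c) : MvPolynomial σ k))))
      = D at h ⊢
  induction D with
  | bot => simp at h
  | coe D =>
    induction D with
    | top => exact le_top
    | coe D =>
      have h' : Nat.card σ ≤ D + Nat.card J := by exact_mod_cast h
      have : Nat.card σ - Nat.card J ≤ D := by omega
      exact WithBot.coe_le_coe.2 (by exact_mod_cast this)

/-- Let `k` be an algebraically closed field of characteristic zero, `n ≥ 1`, `m ≥ n`, and
`q = ⌊m/n⌋`. In `R = k[x_{i,c} : 0 ≤ i < m, 0 ≤ c < n]`, for `0 ≤ j < q` let `d_j` be the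
determinant of the `n × n` matrix `(x_{j·n + r, c})_{r,c}`. Then the Krull dimension of
`R/(d₀, …, d_{q−1})` is `m·n − q`. -/
theorem krullDim_quotient_block_determinants
    (k : Type) [Field k] [IsAlgClosed k] [CharZero k]
    (n m : ℕ) (hn : 1 ≤ n) (hm : n ≤ m) :
    ringKrullDim
      (MvPolynomial (Fin m × Fin n) k ⧸
        (Ideal.span (Set.range fun j : Fin (m / n) =>
          Matrix.det (Matrix.of fun r c : Fin n =>
            MvPolynomial.X
              ((⟨(j : ℕ) * n + (r : ℕ), by
                  calc (j : ℕ) * n + (r : ℕ) < (j : ℕ) * n + n :=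
                        Nat.add_lt_add_left r.isLt _
                    _ = ((j : ℕ) + 1) * n := by ring
                    _ ≤ (m / n) * n := Nat.mul_le_mul_right n j.isLt
                    _ ≤ m := Nat.div_mul_le_self m n⟩ : Fin m), c))) :
          Ideal (MvPolynomial (Fin m × Fin n) k)))
      = ((m * n - m / n : ℕ) : WithBot ℕ∞) := by
  have hq : m * n - m / n = Nat.card (Fin m × Fin n) - Nat.card (Fin (m / n)) := by simp
  rw [hq]
  refine aux_main (k := k) (σ := Fin m × Fin n) (J := Fin (m / n)) hn _ ?_
  intro j r c j' r' c' h
  have h2 := congrArg Prod.snd h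
  have h1 := congrArg (fun p => (Prod.fst p).val) h
  dsimp only at h1 h2
  have hj : ∀ (a : ℕ) (b : Fin n), (a * n + (b : ℕ)) / n = a := fun a b => by
    rw [mul_comm, Nat.mul_add_div hn, Nat.div_eq_of_lt b.isLt, add_zero]
  have hjj : (j : ℕ) = j' := by rw [← hj j r, h1, hj]
  refine ⟨Fin.ext hjj, Fin.ext ?_, h2⟩
  rw [hjj] at h1
  exact Nat.add_left_cancel h1
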